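/- Under the 2-group SBM with observation errors, suppose q ∈ (0,1) and β ∈ (0,1). Then |β̂_b − β| = O_P(n^{−1}) and |β̂_g − (β − γ_g/√n)| = O_P(n^{−1}) for g = 1, 2. Consequently, γ̂_g = √n(β̂_b − β̂_g) converges in probability to γ_g for g = 1, 2, q̂ = û_{1,b}/(1 − β̂_b) converges in probability to q, and μ̂_g = √n(û_{1,g}/(1 − β̂_g) − û_{1,b}/(1 − β̂_b)) converges in probability to μ_g for g = 1, 2. -/

import Mathlib

/-!
STATEMENT 12: Under the 2-group SBM with observation errors,
|β̂_b − β| = O_P(n⁻¹) and |β̂_g − (β − γ_g/√n)| = O_P(n⁻¹) for g = 1,2;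
consequently γ̂_g →ᵖ γ_g, q̂ = û₁,b/(1−β̂_b) →ᵖ q and μ̂_g →ᵖ μ_g.
`O_P(n⁻¹)` is formalized as: for every ε > 0 there is C > 0 such that
eventually P(n·|…| > C) ≤ ε.  The model hypothesis holds for all large n.
-/

open MeasureTheory ProbabilityTheory Filter Finset

noncomputable section

/-- Mass of a label configuration: i.i.d. labels, `true` (minority) w.p. κ. -/
def labelMass (κ : ℝ) {n : ℕ} (l : Fin n → Bool) : ℝ :=
  ∏ i, (if l i then κ else 1 - κ)

/-- Conditional mass of an adjacency configuration given labels: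
independent Bernoulli edges with success probability `B (l i) (l j)`, i < j. -/
def edgeMass {n : ℕ} (B : Bool → Bool → ℝ) (l : Fin n → Bool)
    (a : Fin n → Fin n → Bool) : ℝ :=
  ∏ p ∈ Finset.univ.filter (fun p : Fin n × Fin n => p.1 < p.2),
    (if a p.1 p.2 then B (l p.1) (l p.2) else 1 - B (l p.1) (l p.2))

/-- Conditional mass of an observed network `y` given the construct network
`a` and the labels: each present edge of `a` is kept independently with
probability `1 − βm (l i) (l j)` (type II error rate `βm`), and no edges are
added. -/
def obsMass {n : ℕ} (βm : Bool → Bool → ℝ) (l : Fin n → Bool)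
    (a y : Fin n → Fin n → Bool) : ℝ :=
  ∏ p ∈ Finset.univ.filter (fun p : Fin n × Fin n => p.1 < p.2),
    (if a p.1 p.2 then
      (if y p.1 p.2 then 1 - βm (l p.1) (l p.2) else βm (l p.1) (l p.2))
     else (if y p.1 p.2 then 0 else 1))

/-- The symmetric 2×2 matrix with within-group values `x₁` (group 1 = `true`),
`x₂` (group 2 = `false`) and between-group value `xb`. -/
def sbmB (x₁ x₂ xb : ℝ) : Bool → Bool → ℝ :=
  fun x y => if x then (if y then x₁ else xb) else (if y then xb else x₂)

/-- `(P, c, A, Y, Y')` is a 2-group SBM with connectivity matrix `B` and two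
conditionally independent noisy replicates `Y`, `Y'` with group-dependent
type II error rates `βm`.  The joint law is specified by its probability
mass function. -/
structure IsObsSBM {Ω : Type*} [MeasurableSpace Ω] (P : Measure Ω) (n : ℕ)
    (B βm : Bool → Bool → ℝ) (κ : ℝ)
    (c : Ω → Fin n → Bool) (A Y Y' : Ω → Fin n → Fin n → Bool) : Prop where
  isProb : IsProbabilityMeasure P
  symmA : ∀ ω i j, A ω i j = A ω j i
  looplessA : ∀ ω i, A ω i i = false
  symmY : ∀ ω i j, Y ω i j = Y ω j i
  looplessY : ∀ ω i, Y ω i i = false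
  symmY' : ∀ ω i j, Y' ω i j = Y' ω j i
  looplessY' : ∀ ω i, Y' ω i i = false
  law : ∀ (l : Fin n → Bool) (a y y' : Fin n → Fin n → Bool),
    (∀ i j, a i j = a j i) → (∀ i, a i i = false) →
    (∀ i j, y i j = y j i) → (∀ i, y i i = false) →
    (∀ i j, y' i j = y' j i) → (∀ i, y' i i = false) →
    P {ω | c ω = l ∧ A ω = a ∧ Y ω = y ∧ Y' ω = y'}
      = ENNReal.ofReal (labelMass κ l * edgeMass B l a *
          obsMass βm l a y * obsMass βm l a y')

/-- Number of unordered pairs `i < j` selected by `sel`. -/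
def pairCard {n : ℕ} (sel : Fin n → Fin n → Bool) : ℝ :=
  ((Finset.univ.filter
      (fun p : Fin n × Fin n => p.1 < p.2 ∧ sel p.1 p.2 = true)).card : ℝ)

/-- Pairs within group 1. -/
def within1 {n : ℕ} (c : Fin n → Bool) : Fin n → Fin n → Bool :=
  fun i j => c i && c j

/-- Pairs within group 2. -/
def within2 {n : ℕ} (c : Fin n → Bool) : Fin n → Fin n → Bool :=
  fun i j => !(c i) && !(c j)

/-- Between-group pairs. -/
def between {n : ℕ} (c : Fin n → Bool) : Fin n → Fin n → Bool :=
  fun i j => c i != c j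

/-- `û₁`: observed edge density over the pairs selected by `cls`. -/
def u1hat {n : ℕ} (cls y : Fin n → Fin n → Bool) : ℝ :=
  pairCard (fun i j => cls i j && y i j) / pairCard cls

/-- `û₂`: half the disagreement rate of the two replicates over the pairs
selected by `cls`. -/
def u2hat {n : ℕ} (cls y y' : Fin n → Fin n → Bool) : ℝ :=
  pairCard (fun i j => cls i j && (y i j != y' i j)) / (2 * pairCard cls)

/-- Estimator of the type II error rate over the pairs selected by `cls`. -/
def betaHat {n : ℕ} (cls y y' : Fin n → Fin n → Bool) : ℝ :=
  u2hat cls y y' / u1hat cls y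

/-- `γ̂₁ = √n (β̂_b − β̂₁)`. -/
def gammaHat1 {n : ℕ} (c : Fin n → Bool) (y y' : Fin n → Fin n → Bool) : ℝ :=
  Real.sqrt n * (betaHat (between c) y y' - betaHat (within1 c) y y')

/-- `γ̂₂ = √n (β̂_b − β̂₂)`. -/
def gammaHat2 {n : ℕ} (c : Fin n → Bool) (y y' : Fin n → Fin n → Bool) : ℝ :=
  Real.sqrt n * (betaHat (between c) y y' - betaHat (within2 c) y y')

/-- `μ̂₁ = √n (û₁,₁/(1−β̂₁) − û₁,b/(1−β̂_b))`. -/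
def muHat1 {n : ℕ} (c : Fin n → Bool) (y y' : Fin n → Fin n → Bool) : ℝ :=
  Real.sqrt n * (u1hat (within1 c) y / (1 - betaHat (within1 c) y y')
    - u1hat (between c) y / (1 - betaHat (between c) y y'))

/-- `μ̂₂ = √n (û₁,₂/(1−β̂₂) − û₁,b/(1−β̂_b))`. -/
def muHat2 {n : ℕ} (c : Fin n → Bool) (y y' : Fin n → Fin n → Bool) : ℝ :=
  Real.sqrt n * (u1hat (within2 c) y / (1 - betaHat (within2 c) y y')
    - u1hat (between c) y / (1 - betaHat (between c) y y'))

/-!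
Given the labels, the data at distinct vertex pairs are independent, so by Chebyshev's inequality
the centred sum of a bounded statistic over a block of pairs is `O_P(n)`. The label counts deviate
from their means by `O_P(√n)`, so with high probability every block holds of order `n²` pairs, and
block averages are within `O_P(n⁻¹)` of their means: `B (1 - β)` for `û₁` and `B β (1 - β)` for
`û₂`. Their quotient is `β`, division preserves the rate near a nonzero denominator, and multiplying
differences of such estimators by `√n` leaves an error `O_P(n^(-1/2))`.
-/

section StochasticOrder

variable {ι : Type*} {Ω : ι → Type*} [∀ i, MeasurableSpace (Ω i)] {P : ∀ i, Measure (Ω i)}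
  {l : Filter ι} {X Y Z : ∀ i, Ω i → ℝ} {r s t x y z : ι → ℝ} {x₀ y₀ : ℝ}

/-- `X = O_P(r)` along the filter `l`. Each `X i` lives on its own space `Ω i`; it need not be
measurable, in which case `P i` is read as an outer measure. -/
def IsBigOInProb (P : ∀ i, Measure (Ω i)) (l : Filter ι) (X : ∀ i, Ω i → ℝ) (r : ι → ℝ) : Prop :=
  ∀ ε : ENNReal, 0 < ε → ∃ C > (0 : ℝ), ∀ᶠ i in l, P i {ω | C * r i < |X i ω|} ≤ ε

/-- Convergence in probability, along the filter `l`, of variables living on varying spaces to a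
constant. Mathlib's `TendstoInMeasure` asks for a single space. -/
def TendstoInProb (P : ∀ i, Measure (Ω i)) (l : Filter ι) (X : ∀ i, Ω i → ℝ) (x₀ : ℝ) : Prop :=
  ∀ ε > (0 : ℝ), Tendsto (fun i => P i {ω | ε < |X i ω - x₀|}) l (nhds 0)

theorem IsBigOInProb.of_imp₂ (hX : IsBigOInProb P l X r) (hY : IsBigOInProb P l Y s)
    (h : ∀ C > 0, ∀ D > 0, ∃ E > 0, ∀ᶠ i in l, ∀ ω,
      |X i ω| ≤ C * r i → |Y i ω| ≤ D * s i → |Z i ω| ≤ E * t i) :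
    IsBigOInProb P l Z t := by
  intro ε hε
  obtain ⟨C, hC, hX⟩ := hX (ε / 2) (ENNReal.half_pos hε.ne')
  obtain ⟨D, hD, hY⟩ := hY (ε / 2) (ENNReal.half_pos hε.ne')
  obtain ⟨E, hE, h⟩ := h C hC D hD
  refine ⟨E, hE, ?_⟩
  filter_upwards [hX, hY, h] with i hX hY h
  have hsub : {ω | E * t i < |Z i ω|} ⊆ {ω | C * r i < |X i ω|} ∪ {ω | D * s i < |Y i ω|} := by
    intro ω hZ
    by_contra hXY
    simp only [Set.mem_union, Set.mem_ofPred_eq, not_or, not_lt] at hXY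
    exact (h ω hXY.1 hXY.2).not_gt hZ
  calc P i {ω | E * t i < |Z i ω|}
      ≤ P i {ω | C * r i < |X i ω|} + P i {ω | D * s i < |Y i ω|} :=
        (measure_mono hsub).trans (measure_union_le _ _)
    _ ≤ ε / 2 + ε / 2 := add_le_add hX hY
    _ = ε := ENNReal.add_halves ε

theorem IsBigOInProb.of_chebyshev
    (h : ∀ᶠ i in l, 0 < r i ∧ ∀ t > 0, P i {ω | t < |X i ω|} ≤ ENNReal.ofReal ((r i / t) ^ 2)) :
    IsBigOInProb P l X r := by
  intro ε hε
  have hlim : Tendsto (fun C : ℝ => ENNReal.ofReal (C⁻¹ ^ 2)) atTop (nhds 0) := by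
    simpa using ENNReal.tendsto_ofReal ((tendsto_inv_atTop_zero (𝕜 := ℝ)).pow 2)
  obtain ⟨C, hCε, hC⟩ := ((hlim.eventually_le_const hε).and (eventually_gt_atTop 0)).exists
  refine ⟨C, hC, ?_⟩
  filter_upwards [h] with i ⟨hr, htail⟩
  refine (htail (C * r i) (mul_pos hC hr)).trans ?_
  rwa [show r i / (C * r i) = C⁻¹ by field_simp]

theorem IsBigOInProb.tendstoInProb (h : IsBigOInProb P l (fun i ω => X i ω - x₀) r)
    (hr : Tendsto r l (nhds 0)) : TendstoInProb P l X x₀ := by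
  intro ε hε
  rw [ENNReal.tendsto_nhds_zero]
  intro δ hδ
  obtain ⟨C, -, hC⟩ := h δ hδ
  have hCr : Tendsto (fun i => C * r i) l (nhds 0) := by simpa using hr.const_mul C
  filter_upwards [hC, hCr.eventually_le_const hε] with i hC hCr
  exact (measure_mono fun ω hω => hCr.trans_lt hω).trans hC

theorem abs_div_sub_div_le {a b a' b' M m : ℝ} (hm : 0 < m) (ha : |a| ≤ M) (hb : m ≤ |b|)
    (hb' : |b' - b| ≤ m / 2) :
    |a' / b' - a / b| ≤ 2 / m * (|a' - a| + M / m * |b' - b|) := by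
  have hb0 : b ≠ 0 := abs_pos.1 (hm.trans_le hb)
  have hb'm : m / 2 ≤ |b'| := by linarith [abs_sub_abs_le_abs_sub b b', abs_sub_comm b b']
  have hb'0 : b' ≠ 0 := abs_pos.1 ((half_pos hm).trans_le hb'm)
  have hnum : |(a' - a) - a / b * (b' - b)| ≤ |a' - a| + M / m * |b' - b| := by
    refine (abs_sub _ _).trans ?_
    rw [abs_mul, abs_div]
    gcongr
    exact (abs_nonneg a).trans ha
  calc |a' / b' - a / b| = |(a' - a) - a / b * (b' - b)| / |b'| := by
        rw [← abs_div]
        congr 1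
        field_simp
        ring
    _ ≤ (|a' - a| + M / m * |b' - b|) / (m / 2) :=
        div_le_div₀ ((abs_nonneg _).trans hnum) hnum (half_pos hm) hb'm
    _ = 2 / m * (|a' - a| + M / m * |b' - b|) := by
        field_simp

theorem IsBigOInProb.const_sub_sub_const_sub (hX : IsBigOInProb P l (fun i ω => X i ω - x i) r)
    (a : ℝ) : IsBigOInProb P l (fun i ω => (a - X i ω) - (a - x i)) r := by
  simpa only [IsBigOInProb, sub_sub_sub_cancel_left, abs_sub_comm] using hX

theorem IsBigOInProb.div_sub (hX : IsBigOInProb P l (fun i ω => X i ω - x i) r)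
    (hY : IsBigOInProb P l (fun i ω => Y i ω - y i) r) (hr : Tendsto r l (nhds 0))
    (hx : Tendsto x l (nhds x₀)) (hy : Tendsto y l (nhds y₀)) (hy₀ : y₀ ≠ 0)
    (hz : ∀ᶠ i in l, x i / y i = z i) :
    IsBigOInProb P l (fun i ω => X i ω / Y i ω - z i) r := by
  set m := |y₀| / 2
  set M := |x₀| + 1
  have hm : 0 < m := half_pos (abs_pos.2 hy₀)
  refine hX.of_imp₂ hY fun C hC D hD => ⟨2 / m * (C + M / m * D), by positivity, ?_⟩
  have hDr : Tendsto (fun i => D * r i) l (nhds 0) := by simpa using hr.const_mul D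
  filter_upwards [hz, hx.abs.eventually_le_const (lt_add_one |x₀|),
    hy.abs.eventually_const_le (half_lt_self (abs_pos.2 hy₀)),
    hDr.eventually_le_const (half_pos hm)] with i hz hxM hym hDr ω hX hY
  calc |X i ω / Y i ω - z i| = |X i ω / Y i ω - x i / y i| := by rw [hz]
    _ ≤ 2 / m * (|X i ω - x i| + M / m * |Y i ω - y i|) :=
        abs_div_sub_div_le hm hxM hym (hY.trans hDr)
    _ ≤ 2 / m * (C * r i + M / m * (D * r i)) := by gcongr
    _ = 2 / m * (C + M / m * D) * r i := by ring

end StochasticOrder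

section SqrtScaling

variable {Ω : ℕ → Type*} [∀ n, MeasurableSpace (Ω n)] {P : ∀ n, Measure (Ω n)}
  {X Y : ∀ n, Ω n → ℝ} {x y : ℕ → ℝ} {m : ℝ}

theorem tendsto_sqrt_natCast_atTop : Tendsto (fun n : ℕ => √(n : ℝ)) atTop atTop :=
  Real.tendsto_sqrt_atTop.comp tendsto_natCast_atTop_atTop

theorem tendstoInProb_sqrt_mul_sub
    (hX : IsBigOInProb P atTop (fun n ω => X n ω - x n) (fun n => (n : ℝ)⁻¹))
    (hY : IsBigOInProb P atTop (fun n ω => Y n ω - y n) (fun n => (n : ℝ)⁻¹))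
    (hm : ∀ᶠ n : ℕ in atTop, √(n : ℝ) * (x n - y n) = m) :
    TendstoInProb P atTop (fun n ω => √(n : ℝ) * (X n ω - Y n ω)) m := by
  refine IsBigOInProb.tendstoInProb (r := (fun n : ℕ => √(n : ℝ))⁻¹) ?_
    tendsto_sqrt_natCast_atTop.inv_tendsto_atTop
  refine hX.of_imp₂ hY fun C hC D hD => ⟨C + D, add_pos hC hD, ?_⟩
  filter_upwards [hm] with n hm ω hX hY
  calc |√n * (X n ω - Y n ω) - m| = √n * |(X n ω - x n) - (Y n ω - y n)| := by
        rw [← hm, ← mul_sub, abs_mul, abs_of_nonneg (Real.sqrt_nonneg n), sub_sub_sub_comm]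
    _ ≤ √n * (C * (n : ℝ)⁻¹ + D * (n : ℝ)⁻¹) := by
        gcongr
        exact (abs_sub _ _).trans (add_le_add hX hY)
    _ = (C + D) * (√n / n) := by ring
    _ = (C + D) * (√n)⁻¹ := by rw [Real.sqrt_div_self]

theorem IsBigOInProb.exists_toReal_measure_le
    (h : IsBigOInProb P atTop X (fun n => (n : ℝ)⁻¹)) {ε : ℝ} (hε : 0 < ε) :
    ∃ C > (0 : ℝ), ∀ᶠ n : ℕ in atTop, (P n {ω | C < (n : ℝ) * |X n ω|}).toReal ≤ ε := by
  obtain ⟨C, hC, h⟩ := h (ENNReal.ofReal ε) (ENNReal.ofReal_pos.2 hε)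
  refine ⟨C, hC, ?_⟩
  filter_upwards [h, eventually_gt_atTop 0] with n h hn
  have hn : (0 : ℝ) < n := Nat.cast_pos.2 hn
  simp only [← div_eq_mul_inv, div_lt_iff₀' hn] at h
  exact ENNReal.toReal_le_of_le_ofReal hε.le h

end SqrtScaling

section SecondMoment

theorem sum_prod_mul_eval_mul_eval {E R : Type*} [Fintype E] [DecidableEq E] [CommSemiring R]
    {X : E → Type*} [∀ e, Fintype (X e)] {w g : ∀ e, X e → R} (hw : ∀ e, ∑ x, w e x = 1)
    (hg : ∀ e, ∑ x, w e x * g e x = 0) (e e' : E) :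
    ∑ z : ∀ e, X e, (∏ k, w k (z k)) * (g e (z e) * g e' (z e'))
      = if e = e' then ∑ x, w e x * g e x ^ 2 else 0 := by
  have hfactor : ∀ z : ∀ e, X e, (∏ k, w k (z k)) * (g e (z e) * g e' (z e'))
      = ∏ k, w k (z k) * ((if k = e then g k (z k) else 1) *
          (if k = e' then g k (z k) else 1)) := by
    intro z
    simp only [prod_mul_distrib, prod_ite_eq', mem_univ, if_true]
  simp_rw [hfactor]
  rw [← Fintype.prod_sum fun k x => w k x * ((if k = e then g k x else 1) *
    (if k = e' then g k x else 1))]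
  split_ifs with h
  · subst h
    rw [prod_eq_single_of_mem e (mem_univ e) fun k _ hk => by simp [hk, hw]]
    simp [pow_two]
  · exact prod_eq_zero (mem_univ e) (by simp [h, hg])

theorem sum_prod_mul_sum_sq {E R : Type*} [Fintype E] [DecidableEq E] [CommSemiring R]
    {X : E → Type*} [∀ e, Fintype (X e)] {w g : ∀ e, X e → R} (hw : ∀ e, ∑ x, w e x = 1)
    (hg : ∀ e, ∑ x, w e x * g e x = 0) :
    ∑ z : ∀ e, X e, (∏ e, w e (z e)) * (∑ e, g e (z e)) ^ 2 = ∑ e, ∑ x, w e x * g e x ^ 2 := by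
  calc ∑ z : ∀ e, X e, (∏ e, w e (z e)) * (∑ e, g e (z e)) ^ 2
      = ∑ e, ∑ e', ∑ z : ∀ e, X e, (∏ k, w k (z k)) * (g e (z e) * g e' (z e')) := by
        simp_rw [pow_two, sum_mul_sum, mul_sum]
        rw [sum_comm]
        exact sum_congr rfl fun e _ => sum_comm
    _ = ∑ e, ∑ x, w e x * g e x ^ 2 := by
        simp only [sum_prod_mul_eval_mul_eval hw hg, sum_ite_eq, mem_univ, if_true]

theorem sum_prod_mul_sum_sq_le_card {E : Type*} [Fintype E] [DecidableEq E]
    {X : E → Type*} [∀ e, Fintype (X e)] {w g : ∀ e, X e → ℝ} (hw₀ : ∀ e x, 0 ≤ w e x)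
    (hw : ∀ e, ∑ x, w e x = 1) (hg : ∀ e, ∑ x, w e x * g e x = 0) (hg₁ : ∀ e x, |g e x| ≤ 1) :
    ∑ z : ∀ e, X e, (∏ e, w e (z e)) * (∑ e, g e (z e)) ^ 2 ≤ Fintype.card E := by
  calc ∑ z : ∀ e, X e, (∏ e, w e (z e)) * (∑ e, g e (z e)) ^ 2
      = ∑ e, ∑ x, w e x * g e x ^ 2 := sum_prod_mul_sum_sq hw hg
    _ ≤ ∑ e, ∑ x, w e x := by
        gcongr with e _ x _
        exact mul_le_of_le_one_right (hw₀ e x) ((sq_le_one_iff_abs_le_one _).2 (hg₁ e x))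
    _ = Fintype.card E := by simp [hw]

theorem measure_lt_abs_le_of_measure_fiber_le {Ω α : Type*} [MeasurableSpace Ω] {P : Measure Ω}
    [Fintype α] {Z : Ω → α} {w : α → ℝ} (hw : ∀ a, 0 ≤ w a)
    (hZ : ∀ a, P {ω | Z ω = a} ≤ ENNReal.ofReal (w a)) (f : α → ℝ) {t : ℝ} (ht : 0 < t) :
    P {ω | t < |f (Z ω)|} ≤ ENNReal.ofReal ((∑ a, w a * f a ^ 2) / t ^ 2) := by
  have hterm : ∀ a, t < |f a| → w a ≤ w a * f a ^ 2 / t ^ 2 := by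
    intro a ha
    rw [mul_div_assoc]
    refine le_mul_of_one_le_right (hw a) ((one_le_div (by positivity)).2 ?_)
    exact (pow_le_pow_left₀ ht.le ha.le 2).trans_eq (sq_abs _)
  have hcover : {ω | t < |f (Z ω)|} ⊆ ⋃ a ∈ univ.filter fun a => t < |f a|, {ω | Z ω = a} := by
    intro ω hω
    simpa using hω
  calc P {ω | t < |f (Z ω)|} ≤ ∑ a with t < |f a|, P {ω | Z ω = a} :=
        (measure_mono hcover).trans (measure_biUnion_finset_le _ _)
    _ ≤ ∑ a with t < |f a|, ENNReal.ofReal (w a * f a ^ 2 / t ^ 2) :=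
        sum_le_sum fun a ha =>
          (hZ a).trans (ENNReal.ofReal_le_ofReal (hterm a (mem_filter.1 ha).2))
    _ ≤ ∑ a, ENNReal.ofReal (w a * f a ^ 2 / t ^ 2) :=
        sum_le_sum_of_subset (filter_subset _ _)
    _ = ENNReal.ofReal ((∑ a, w a * f a ^ 2) / t ^ 2) := by
        rw [sum_div, ENNReal.ofReal_sum_of_nonneg]
        exact fun a _ => div_nonneg (mul_nonneg (hw a) (sq_nonneg _)) (sq_nonneg t)

end SecondMoment

section ConfigurationLaw

/-- The unordered pairs of distinct vertices, encoded by `i < j`. -/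
abbrev VertexPair (n : ℕ) := {p : Fin n × Fin n // p.1 < p.2}

/-- The upper triangles of `a`, `y`, `y'`; on these data the conditional law given the labels is
a product over the vertex pairs. -/
def pairData {n : ℕ} (a y y' : Fin n → Fin n → Bool) : VertexPair n → Bool × Bool × Bool :=
  fun e => (a e.1.1 e.1.2, y e.1.1 e.1.2, y' e.1.1 e.1.2)

/-- Mass of the triple (edge, first observation, second observation) at one vertex pair with edge
probability `p` and type II error rate `b`. -/
def pairMass (p b : ℝ) (x : Bool × Bool × Bool) : ℝ :=
  (if x.1 then p else 1 - p) *
    (if x.1 then (if x.2.1 then 1 - b else b) else (if x.2.1 then 0 else 1)) *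
    (if x.1 then (if x.2.2 then 1 - b else b) else (if x.2.2 then 0 else 1))

/-- Joint mass of the labels `l` and the pair data `z`. -/
def configMass {n : ℕ} (B βm : Bool → Bool → ℝ) (κ : ℝ) (l : Fin n → Bool)
    (z : VertexPair n → Bool × Bool × Bool) : ℝ :=
  labelMass κ l * ∏ e, pairMass (B (l e.1.1) (l e.1.2)) (βm (l e.1.1) (l e.1.2)) (z e)

theorem pairMass_nonneg {p b : ℝ} (hp : p ∈ Set.Icc 0 1) (hb : b ∈ Set.Icc 0 1)
    (x : Bool × Bool × Bool) : 0 ≤ pairMass p b x := by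
  have hp' : 0 ≤ 1 - p := sub_nonneg.2 hp.2
  have hb' : 0 ≤ 1 - b := sub_nonneg.2 hb.2
  have := hp.1
  have := hb.1
  unfold pairMass
  split_ifs <;> positivity

theorem sum_pairMass (p b : ℝ) : ∑ x, pairMass p b x = 1 := by
  simp only [pairMass, Fintype.sum_prod_type, Fintype.sum_bool, Bool.false_eq_true, if_true,
    if_false]
  ring

theorem labelMass_nonneg {κ : ℝ} (hκ : κ ∈ Set.Icc 0 1) {n : ℕ} (l : Fin n → Bool) :
    0 ≤ labelMass κ l :=
  prod_nonneg fun i _ => by split_ifs <;> linarith [hκ.1, hκ.2]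

theorem sum_labelMass (κ : ℝ) (n : ℕ) : ∑ l : Fin n → Bool, labelMass κ l = 1 := by
  unfold labelMass
  rw [← Fintype.prod_sum fun (_ : Fin n) (b : Bool) => if b then κ else 1 - κ]
  simp

variable {n : ℕ} {B βm : Bool → Bool → ℝ} {κ : ℝ}

theorem sum_configMass (B βm : Bool → Bool → ℝ) (κ : ℝ) (l : Fin n → Bool) :
    ∑ z, configMass B βm κ l z = labelMass κ l := by
  simp only [configMass]
  rw [← mul_sum, ← Fintype.prod_sum]
  simp only [sum_pairMass, prod_const_one, mul_one]

theorem configMass_nonneg (hκ : κ ∈ Set.Icc 0 1) (hB : ∀ x y, B x y ∈ Set.Icc 0 1)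
    (hβ : ∀ x y, βm x y ∈ Set.Icc 0 1) (l : Fin n → Bool)
    (z : VertexPair n → Bool × Bool × Bool) : 0 ≤ configMass B βm κ l z :=
  mul_nonneg (labelMass_nonneg hκ l) (prod_nonneg fun _ _ => pairMass_nonneg (hB _ _) (hβ _ _) _)

theorem configMass_pairData (B βm : Bool → Bool → ℝ) (κ : ℝ) (l : Fin n → Bool)
    (a y y' : Fin n → Fin n → Bool) :
    configMass B βm κ l (pairData a y y')
      = labelMass κ l * edgeMass B l a * obsMass βm l a y * obsMass βm l a y' := by
  have hsub : ∀ f : Fin n × Fin n → ℝ,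
      ∏ p ∈ univ.filter (fun p : Fin n × Fin n => p.1 < p.2), f p = ∏ e : VertexPair n, f e :=
    prod_subtype _ (by simp)
  simp only [configMass, edgeMass, obsMass, hsub, pairMass, pairData, prod_mul_distrib, mul_assoc]
  rfl

theorem eq_of_symm_of_loopless {a a' : Fin n → Fin n → Bool} (hs : ∀ i j, a i j = a j i)
    (hs' : ∀ i j, a' i j = a' j i) (hl : ∀ i, a i i = false) (hl' : ∀ i, a' i i = false)
    (h : ∀ i j, i < j → a i j = a' i j) : a = a' := by
  funext i j
  rcases lt_trichotomy i j with hij | rfl | hji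
  · exact h i j hij
  · rw [hl, hl']
  · rw [hs, hs', h j i hji]

namespace IsObsSBM

variable {Ω : Type*} [MeasurableSpace Ω] {P : Measure Ω} {c : Ω → Fin n → Bool}
  {A Y Y' : Ω → Fin n → Fin n → Bool}

theorem measure_config_le (h : IsObsSBM P n B βm κ c A Y Y') (l : Fin n → Bool)
    (z : VertexPair n → Bool × Bool × Bool) :
    P {ω | (c ω, pairData (A ω) (Y ω) (Y' ω)) = (l, z)}
      ≤ ENNReal.ofReal (configMass B βm κ l z) := by
  rcases Set.eq_empty_or_nonempty {ω | (c ω, pairData (A ω) (Y ω) (Y' ω)) = (l, z)} with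
    hempty | ⟨ω₀, hω₀⟩
  · rw [hempty, measure_empty]
    exact zero_le
  obtain ⟨rfl, rfl⟩ := Prod.mk.inj hω₀
  rw [configMass_pairData, ← h.law (c ω₀) (A ω₀) (Y ω₀) (Y' ω₀) (h.symmA ω₀) (h.looplessA ω₀)
    (h.symmY ω₀) (h.looplessY ω₀) (h.symmY' ω₀) (h.looplessY' ω₀)]
  refine measure_mono fun ω hω => ?_
  obtain ⟨hc, hz⟩ := Prod.mk.inj hω
  have hpair : ∀ i j, i < j → A ω i j = A ω₀ i j ∧ Y ω i j = Y ω₀ i j ∧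
      Y' ω i j = Y' ω₀ i j := fun i j hij => by
    simpa only [pairData, Prod.mk.injEq] using congrFun hz ⟨(i, j), hij⟩
  exact ⟨hc,
    eq_of_symm_of_loopless (h.symmA ω) (h.symmA ω₀) (h.looplessA ω) (h.looplessA ω₀)
      fun i j hij => (hpair i j hij).1,
    eq_of_symm_of_loopless (h.symmY ω) (h.symmY ω₀) (h.looplessY ω) (h.looplessY ω₀)
      fun i j hij => (hpair i j hij).2.1,
    eq_of_symm_of_loopless (h.symmY' ω) (h.symmY' ω₀) (h.looplessY' ω) (h.looplessY' ω₀)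
      fun i j hij => (hpair i j hij).2.2⟩

theorem measure_lt_abs_le (h : IsObsSBM P n B βm κ c A Y Y') (hκ : κ ∈ Set.Icc 0 1)
    (hB : ∀ x y, B x y ∈ Set.Icc 0 1) (hβ : ∀ x y, βm x y ∈ Set.Icc 0 1)
    (f : (Fin n → Bool) → (VertexPair n → Bool × Bool × Bool) → ℝ) {v t : ℝ}
    (hf : ∑ l, ∑ z, configMass B βm κ l z * f l z ^ 2 ≤ v ^ 2) (ht : 0 < t) :
    P {ω | t < |f (c ω) (pairData (A ω) (Y ω) (Y' ω))|} ≤ ENNReal.ofReal ((v / t) ^ 2) := by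
  have htail := measure_lt_abs_le_of_measure_fiber_le
    (Z := fun ω => (c ω, pairData (A ω) (Y ω) (Y' ω))) (w := fun a => configMass B βm κ a.1 a.2)
    (fun a => configMass_nonneg hκ hB hβ a.1 a.2) (fun a => h.measure_config_le a.1 a.2)
    (fun a => f a.1 a.2) ht
  refine htail.trans (ENNReal.ofReal_le_ofReal ?_)
  rw [Fintype.sum_prod_type, div_pow]
  gcongr

end IsObsSBM

/-- Centred count of the vertices labelled `true`. -/
def labelDeviation (κ : ℝ) (l : Fin n → Bool) : ℝ := ∑ i, ((if l i then 1 else 0) - κ)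

theorem sum_labelMass_mul_labelDeviation_sq_le (hκ : κ ∈ Set.Icc 0 1) :
    ∑ l : Fin n → Bool, labelMass κ l * labelDeviation κ l ^ 2 ≤ n := by
  have := sum_prod_mul_sum_sq_le_card (E := Fin n) (X := fun _ => Bool)
    (w := fun _ b => if b then κ else 1 - κ) (g := fun _ b => (if b then 1 else 0) - κ)
    (fun _ b => by split_ifs <;> linarith [hκ.1, hκ.2]) (fun _ => by simp)
    (fun _ => by simp only [Fintype.sum_bool, Bool.false_eq_true, if_true, if_false]; ring)
    (fun _ b => by rw [abs_le]; split_ifs <;> constructor <;> linarith [hκ.1, hκ.2])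
  simpa only [labelMass, labelDeviation, Fintype.card_fin] using this

theorem sum_configMass_mul_labelDeviation_sq_le (B βm : Bool → Bool → ℝ)
    (hκ : κ ∈ Set.Icc 0 1) :
    ∑ l : Fin n → Bool, ∑ z, configMass B βm κ l z * labelDeviation κ l ^ 2 ≤ n := by
  simp only [← sum_mul, sum_configMass]
  exact sum_labelMass_mul_labelDeviation_sq_le hκ

end ConfigurationLaw

section BlockCounts

/-- The pairs with one endpoint labelled `x` and the other labelled `y`: the three classes of pairs
of the model in a uniform notation. -/
def inBlock (x y : Bool) {n : ℕ} (c : Fin n → Bool) : Fin n → Fin n → Bool :=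
  fun i j => (c i == x && c j == y) || (c i == y && c j == x)

variable {n : ℕ}

theorem within1_eq_inBlock (c : Fin n → Bool) : within1 c = inBlock true true c := by
  funext i j
  simp [within1, inBlock]

theorem within2_eq_inBlock (c : Fin n → Bool) : within2 c = inBlock false false c := by
  funext i j
  simp [within2, inBlock]

theorem between_eq_inBlock (c : Fin n → Bool) : between c = inBlock true false c := by
  funext i j
  cases hi : c i <;> cases hj : c j <;> simp [between, inBlock, hi, hj]

theorem pairCard_eq_sum (sel : Fin n → Fin n → Bool) :
    pairCard sel = ∑ e : VertexPair n, if sel e.1.1 e.1.2 then 1 else 0 := by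
  rw [pairCard, ← filter_filter, card_filter, Nat.cast_sum]
  push_cast
  exact sum_subtype _ (by simp) _

theorem card_mul_card_le_two_mul_pairCard_inBlock_add (x y : Bool) (c : Fin n → Bool) :
    (#{i | c i = x} : ℝ) * #{j | c j = y} ≤ 2 * pairCard (inBlock x y c) + n := by
  set S : Finset (Fin n × Fin n) := {p | p.1 < p.2 ∧ inBlock x y c p.1 p.2 = true}
  have hcover : ({i | c i = x} : Finset (Fin n)) ×ˢ ({j | c j = y} : Finset (Fin n))
      ⊆ S ∪ S.image Prod.swap ∪ univ.diag := by
    rintro ⟨i, j⟩ hij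
    obtain ⟨hi, hj⟩ : c i = x ∧ c j = y := by simpa using hij
    rcases lt_trichotomy i j with h | rfl | h <;> simp [S, inBlock, *]
  have hcard : #{i | c i = x} * #{j | c j = y} ≤ #S + #S + n := by
    calc #{i | c i = x} * #{j | c j = y}
        ≤ #(S ∪ S.image Prod.swap ∪ (univ : Finset (Fin n)).diag) :=
          (card_product _ _).symm.trans_le (card_le_card hcover)
      _ ≤ #S + #(S.image Prod.swap) + #(univ : Finset (Fin n)).diag :=
          (card_union_le _ _).trans (Nat.add_le_add_right (card_union_le _ _) _)
      _ ≤ #S + #S + n := by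
          rw [diag_card, card_univ, Fintype.card_fin]
          exact Nat.add_le_add_right (Nat.add_le_add_left card_image_le _) _
  rw [two_mul, pairCard]
  exact_mod_cast hcard

theorem abs_card_sub_eq_abs_labelDeviation (κ : ℝ) (c : Fin n → Bool) (x : Bool) :
    |(#{i | c i = x} : ℝ) - (if x then κ else 1 - κ) * n| = |labelDeviation κ c| := by
  have htrue : labelDeviation κ c = #{i | c i = true} - κ * n := by
    simp [labelDeviation, sum_sub_distrib, mul_comm]
  have hcompl : (#{i | c i = true} : ℝ) + #{i | c i = false} = n := by
    have := card_filter_add_card_filter_not (s := univ) fun i => c i = true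
    simp only [Bool.not_eq_true, card_univ, Fintype.card_fin] at this
    exact_mod_cast this
  cases x
  · rw [htrue, ← abs_neg, ← hcompl]
    simp only [Bool.false_eq_true, if_false]
    ring_nf
  · rw [htrue]
    simp

theorem exists_forall_mul_sq_le_pairCard_inBlock {κ : ℝ} (hκ : κ ∈ Set.Ioo 0 1) (x y : Bool) :
    ∃ δ > 0, ∀ C : ℝ, ∀ᶠ n : ℕ in atTop, ∀ c : Fin n → Bool,
      |labelDeviation κ c| ≤ C * √n → δ * (n : ℝ) ^ 2 ≤ pairCard (inBlock x y c) := by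
  set η := min κ (1 - κ) / 2
  have hη : 0 < η := half_pos (lt_min hκ.1 (sub_pos.2 hκ.2))
  refine ⟨η ^ 2 / 4, by positivity, fun C => ?_⟩
  filter_upwards [tendsto_sqrt_natCast_atTop.eventually_ge_atTop (C / η),
    tendsto_natCast_atTop_atTop.eventually_ge_atTop (2 / η ^ 2)] with n hCn hn c hc
  have hCn : C * √n ≤ η * n := by
    rw [div_le_iff₀' hη] at hCn
    calc C * √n ≤ η * √n * √n := by gcongr
      _ = η * n := by rw [mul_assoc, Real.mul_self_sqrt n.cast_nonneg]
  have hcount : ∀ z, η * n ≤ #{i | c i = z} := by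
    intro z
    have hz : 2 * η ≤ if z then κ else 1 - κ := by
      rw [mul_div_cancel₀ _ two_ne_zero]
      split_ifs
      exacts [min_le_left _ _, min_le_right _ _]
    have hlow := (abs_le.1 ((abs_card_sub_eq_abs_labelDeviation κ c z).trans_le hc)).1
    have := mul_le_mul_of_nonneg_right hz n.cast_nonneg
    linarith
  have hprod : (η * n) * (η * n) ≤ 2 * pairCard (inBlock x y c) + n :=
    (mul_le_mul (hcount x) (hcount y) (by positivity) (by positivity)).trans
      (card_mul_card_le_two_mul_pairCard_inBlock_add x y c)
  have hdiag : (n : ℝ) ≤ η ^ 2 / 2 * n ^ 2 := by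
    rw [div_le_iff₀' (by positivity)] at hn
    nlinarith [mul_le_mul_of_nonneg_right hn n.cast_nonneg]
  linarith

end BlockCounts

section BlockMeans

/-- Expectation of the statistic `h` of one vertex pair with edge probability `p` and type II error
rate `b`. -/
def pairExpect (p b : ℝ) (h : Bool × Bool × Bool → ℝ) : ℝ := ∑ v, pairMass p b v * h v

theorem pairExpect_mem_Icc {p b : ℝ} (hp : p ∈ Set.Icc 0 1) (hb : b ∈ Set.Icc 0 1)
    {h : Bool × Bool × Bool → ℝ} (hh : ∀ v, h v ∈ Set.Icc 0 1) :
    pairExpect p b h ∈ Set.Icc 0 1 := by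
  refine ⟨sum_nonneg fun v _ => mul_nonneg (pairMass_nonneg hp hb v) (hh v).1, ?_⟩
  rw [← sum_pairMass p b]
  exact sum_le_sum fun v _ => mul_le_of_le_one_right (pairMass_nonneg hp hb v) (hh v).2

variable {n : ℕ}

/-- Average of the statistic `h` over the pairs of a block; `û₁` and `û₂` are of this form. -/
def blockMean (x y : Bool) (h : Bool × Bool × Bool → ℝ) (l : Fin n → Bool)
    (z : VertexPair n → Bool × Bool × Bool) : ℝ :=
  (∑ e, if inBlock x y l e.1.1 e.1.2 then h (z e) else 0) / pairCard (inBlock x y l)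

/-- Sum over the pairs of a block of the statistic `h` centred at `m`. -/
def blockDeviation (x y : Bool) (h : Bool × Bool × Bool → ℝ) (m : ℝ) (l : Fin n → Bool)
    (z : VertexPair n → Bool × Bool × Bool) : ℝ :=
  ∑ e, if inBlock x y l e.1.1 e.1.2 then h (z e) - m else 0

theorem blockMean_sub {x y : Bool} {l : Fin n → Bool} (h : Bool × Bool × Bool → ℝ) (m : ℝ)
    (z : VertexPair n → Bool × Bool × Bool) (hN : pairCard (inBlock x y l) ≠ 0) :
    blockMean x y h l z - m = blockDeviation x y h m l z / pairCard (inBlock x y l) := by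
  rw [blockMean, div_sub' hN, pairCard_eq_sum, sum_mul, ← sum_sub_distrib, blockDeviation]
  congr 2 with e
  split_ifs <;> ring

theorem sum_pairMass_mul_ite_inBlock_eq_zero {B βm : Bool → Bool → ℝ}
    (hBs : ∀ x y, B x y = B y x) (hβs : ∀ x y, βm x y = βm y x) (x y : Bool)
    (h : Bool × Bool × Bool → ℝ) (l : Fin n → Bool) (i j : Fin n) :
    ∑ v, pairMass (B (l i) (l j)) (βm (l i) (l j)) v *
      (if inBlock x y l i j then h v - pairExpect (B x y) (βm x y) h else 0) = 0 := by
  split_ifs with hij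
  · have hparam : B (l i) (l j) = B x y ∧ βm (l i) (l j) = βm x y := by
      simp only [inBlock, Bool.or_eq_true, Bool.and_eq_true, beq_iff_eq] at hij
      rcases hij with ⟨rfl, rfl⟩ | ⟨rfl, rfl⟩
      exacts [⟨rfl, rfl⟩, ⟨hBs _ _, hβs _ _⟩]
    simp only [hparam.1, hparam.2, mul_sub, sum_sub_distrib, ← sum_mul, sum_pairMass, one_mul]
    exact sub_self _
  · simp only [mul_zero, sum_const_zero]

theorem sum_prod_pairMass_mul_blockDeviation_sq_le {B βm : Bool → Bool → ℝ}
    (hB : ∀ x y, B x y ∈ Set.Icc 0 1) (hβ : ∀ x y, βm x y ∈ Set.Icc 0 1)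
    (hBs : ∀ x y, B x y = B y x) (hβs : ∀ x y, βm x y = βm y x) (x y : Bool)
    {h : Bool × Bool × Bool → ℝ} (hh : ∀ v, h v ∈ Set.Icc 0 1) (l : Fin n → Bool) :
    ∑ z, (∏ e, pairMass (B (l e.1.1) (l e.1.2)) (βm (l e.1.1) (l e.1.2)) (z e)) *
      blockDeviation x y h (pairExpect (B x y) (βm x y) h) l z ^ 2 ≤ (n : ℝ) ^ 2 := by
  have hm := pairExpect_mem_Icc (hB x y) (hβ x y) hh
  have hmoment := sum_prod_mul_sum_sq_le_card (E := VertexPair n)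
    (w := fun e => pairMass (B (l e.1.1) (l e.1.2)) (βm (l e.1.1) (l e.1.2)))
    (g := fun e v =>
      if inBlock x y l e.1.1 e.1.2 then h v - pairExpect (B x y) (βm x y) h else 0)
    (fun e => pairMass_nonneg (hB _ _) (hβ _ _)) (fun e => sum_pairMass _ _)
    (fun e => sum_pairMass_mul_ite_inBlock_eq_zero hBs hβs x y h l e.1.1 e.1.2)
    (fun e v => by
      split_ifs
      · exact abs_sub_le_of_nonneg_of_le (hh v).1 (hh v).2 hm.1 hm.2
      · exact abs_zero.trans_le zero_le_one)
  have hcard : Fintype.card (VertexPair n) ≤ n ^ 2 := by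
    simpa [pow_two] using Fintype.card_subtype_le fun p : Fin n × Fin n => p.1 < p.2
  exact hmoment.trans (by exact_mod_cast hcard)

theorem sum_configMass_mul_blockDeviation_sq_le {B βm : Bool → Bool → ℝ} {κ : ℝ}
    (hκ : κ ∈ Set.Icc 0 1) (hB : ∀ x y, B x y ∈ Set.Icc 0 1) (hβ : ∀ x y, βm x y ∈ Set.Icc 0 1)
    (hBs : ∀ x y, B x y = B y x) (hβs : ∀ x y, βm x y = βm y x) (x y : Bool)
    {h : Bool × Bool × Bool → ℝ} (hh : ∀ v, h v ∈ Set.Icc 0 1) :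
    ∑ l : Fin n → Bool, ∑ z, configMass B βm κ l z *
      blockDeviation x y h (pairExpect (B x y) (βm x y) h) l z ^ 2 ≤ (n : ℝ) ^ 2 := by
  calc ∑ l : Fin n → Bool, ∑ z, configMass B βm κ l z *
        blockDeviation x y h (pairExpect (B x y) (βm x y) h) l z ^ 2
      ≤ ∑ l : Fin n → Bool, labelMass κ l * (n : ℝ) ^ 2 := by
        refine sum_le_sum fun l _ => ?_
        simp only [configMass, mul_assoc, ← mul_sum]
        exact mul_le_mul_of_nonneg_left
          (sum_prod_pairMass_mul_blockDeviation_sq_le hB hβ hBs hβs x y hh l)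
          (labelMass_nonneg hκ l)
    _ = (n : ℝ) ^ 2 := by rw [← sum_mul, sum_labelMass, one_mul]

/-- The statistic behind `û₁`. -/
def observedEdge (v : Bool × Bool × Bool) : ℝ := if v.2.1 then 1 else 0

/-- The statistic behind `û₂`. -/
def halfDisagreement (v : Bool × Bool × Bool) : ℝ := if v.2.1 != v.2.2 then 1 / 2 else 0

theorem observedEdge_mem_Icc (v : Bool × Bool × Bool) : observedEdge v ∈ Set.Icc 0 1 := by
  unfold observedEdge
  split_ifs <;> norm_num

theorem halfDisagreement_mem_Icc (v : Bool × Bool × Bool) : halfDisagreement v ∈ Set.Icc 0 1 := by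
  unfold halfDisagreement
  split_ifs <;> norm_num

theorem pairExpect_observedEdge (p b : ℝ) : pairExpect p b observedEdge = p * (1 - b) := by
  simp only [pairExpect, pairMass, observedEdge, Fintype.sum_prod_type, Fintype.sum_bool,
    Bool.false_eq_true, if_true, if_false]
  ring

theorem pairExpect_halfDisagreement (p b : ℝ) :
    pairExpect p b halfDisagreement = p * b * (1 - b) := by
  simp only [pairExpect, pairMass, halfDisagreement, Fintype.sum_prod_type, Fintype.sum_bool,
    Bool.bne_false, Bool.bne_true, Bool.not_true, Bool.not_false, Bool.false_eq_true, if_true,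
    if_false]
  ring

theorem u1hat_inBlock_eq_blockMean (x y : Bool) (c : Fin n → Bool) (a u u' : Fin n → Fin n → Bool) :
    u1hat (inBlock x y c) u = blockMean x y observedEdge c (pairData a u u') := by
  rw [u1hat, blockMean, pairCard_eq_sum]
  congr 2 with e
  cases inBlock x y c e.1.1 e.1.2 <;> cases h : u e.1.1 e.1.2 <;> simp [observedEdge, pairData, h]

theorem u2hat_inBlock_eq_blockMean (x y : Bool) (c : Fin n → Bool) (a u u' : Fin n → Fin n → Bool) :
    u2hat (inBlock x y c) u u' = blockMean x y halfDisagreement c (pairData a u u') := by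
  rw [u2hat, blockMean, pairCard_eq_sum, ← div_div, sum_div]
  congr 2 with e
  cases inBlock x y c e.1.1 e.1.2 <;> simp [halfDisagreement, pairData, ite_div]

end BlockMeans

/-- A sequence of observed block models, one for each large vertex count, whose connectivities `B n`
and error rates `βm n` drift towards `B₀` and `β₀` inside the open unit interval. -/
structure IsDriftingObsSBM {Ω : ℕ → Type*} [∀ n, MeasurableSpace (Ω n)] (P : ∀ n, Measure (Ω n))
    (B βm : ℕ → Bool → Bool → ℝ) (B₀ β₀ : Bool → Bool → ℝ) (κ : ℝ) (c : ∀ n, Ω n → Fin n → Bool)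
    (A Y Y' : ∀ n, Ω n → Fin n → Fin n → Bool) : Prop where
  model : ∀ᶠ n in atTop, IsObsSBM (P n) n (B n) (βm n) κ (c n) (A n) (Y n) (Y' n)
  label_mem : κ ∈ Set.Ioo 0 1
  conn_symm : ∀ n x y, B n x y = B n y x
  err_symm : ∀ n x y, βm n x y = βm n y x
  tendsto_conn : ∀ x y, Tendsto (fun n => B n x y) atTop (nhds (B₀ x y))
  tendsto_err : ∀ x y, Tendsto (fun n => βm n x y) atTop (nhds (β₀ x y))
  conn_mem : ∀ x y, B₀ x y ∈ Set.Ioo 0 1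
  err_mem : ∀ x y, β₀ x y ∈ Set.Ioo 0 1

namespace IsDriftingObsSBM

variable {Ω : ℕ → Type*} [∀ n, MeasurableSpace (Ω n)] {P : ∀ n, Measure (Ω n)}
  {B βm : ℕ → Bool → Bool → ℝ} {B₀ β₀ : Bool → Bool → ℝ} {κ : ℝ} {c : ∀ n, Ω n → Fin n → Bool}
  {A Y Y' : ∀ n, Ω n → Fin n → Fin n → Bool}

theorem eventually_mem_Ioo (M : IsDriftingObsSBM P B βm B₀ β₀ κ c A Y Y') :
    ∀ᶠ n in atTop, ∀ x y, B n x y ∈ Set.Ioo 0 1 ∧ βm n x y ∈ Set.Ioo 0 1 := by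
  simp only [eventually_all]
  exact fun x y => ((M.tendsto_conn x y).eventually_mem (Ioo_mem_nhds (M.conn_mem x y).1
    (M.conn_mem x y).2)).and ((M.tendsto_err x y).eventually_mem (Ioo_mem_nhds (M.err_mem x y).1
    (M.err_mem x y).2))

theorem isBigOInProb_of_sum_configMass_mul_sq_le (M : IsDriftingObsSBM P B βm B₀ β₀ κ c A Y Y')
    {f : ∀ n, (Fin n → Bool) → (VertexPair n → Bool × Bool × Bool) → ℝ} {r : ℕ → ℝ}
    (hr : ∀ᶠ n in atTop, 0 < r n)
    (hf : ∀ n, (∀ x y, B n x y ∈ Set.Icc 0 1) → (∀ x y, βm n x y ∈ Set.Icc 0 1) →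
      ∑ l, ∑ z, configMass (B n) (βm n) κ l z * f n l z ^ 2 ≤ r n ^ 2) :
    IsBigOInProb P atTop (fun n ω => f n (c n ω) (pairData (A n ω) (Y n ω) (Y' n ω))) r := by
  refine .of_chebyshev ?_
  filter_upwards [M.model, M.eventually_mem_Ioo, hr] with n hn hmem hr
  have hB := fun x y => Set.Ioo_subset_Icc_self (hmem x y).1
  have hβ := fun x y => Set.Ioo_subset_Icc_self (hmem x y).2
  exact ⟨hr, fun t ht => hn.measure_lt_abs_le (Set.Ioo_subset_Icc_self M.label_mem) hB hβ (f n)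
    (hf n hB hβ) ht⟩

theorem isBigOInProb_labelDeviation (M : IsDriftingObsSBM P B βm B₀ β₀ κ c A Y Y') :
    IsBigOInProb P atTop (fun n ω => labelDeviation κ (c n ω)) fun n => √n :=
  M.isBigOInProb_of_sum_configMass_mul_sq_le (f := fun _ l _ => labelDeviation κ l)
    (tendsto_sqrt_natCast_atTop.eventually_gt_atTop 0) fun n _ _ =>
      (sum_configMass_mul_labelDeviation_sq_le _ _ (Set.Ioo_subset_Icc_self M.label_mem)).trans_eq
        (Real.sq_sqrt n.cast_nonneg).symm

theorem isBigOInProb_blockMean_sub_pairExpect (M : IsDriftingObsSBM P B βm B₀ β₀ κ c A Y Y')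
    (x y : Bool) {h : Bool × Bool × Bool → ℝ} (hh : ∀ v, h v ∈ Set.Icc 0 1) :
    IsBigOInProb P atTop (fun n ω => blockMean x y h (c n ω) (pairData (A n ω) (Y n ω) (Y' n ω)) -
      pairExpect (B n x y) (βm n x y) h) fun n => (n : ℝ)⁻¹ := by
  have hdev : IsBigOInProb P atTop (fun n ω => blockDeviation x y h
      (pairExpect (B n x y) (βm n x y) h) (c n ω) (pairData (A n ω) (Y n ω) (Y' n ω)))
      fun n => (n : ℝ) :=
    M.isBigOInProb_of_sum_configMass_mul_sq_le
      (f := fun n => blockDeviation x y h (pairExpect (B n x y) (βm n x y) h))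
      (tendsto_natCast_atTop_atTop.eventually_gt_atTop 0) fun n hB hβ =>
        sum_configMass_mul_blockDeviation_sq_le (Set.Ioo_subset_Icc_self M.label_mem) hB hβ
          (M.conn_symm n) (M.err_symm n) x y hh
  obtain ⟨δ, hδ, hcard⟩ := exists_forall_mul_sq_le_pairCard_inBlock M.label_mem x y
  refine M.isBigOInProb_labelDeviation.of_imp₂ hdev fun C _ D hD => ⟨D / δ, div_pos hD hδ, ?_⟩
  filter_upwards [hcard C, eventually_gt_atTop 0] with n hcard hn ω hlabel hdev
  have : (0 : ℝ) < n := Nat.cast_pos.2 hn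
  have hN := hcard (c n ω) hlabel
  have hN₀ : 0 < pairCard (inBlock x y (c n ω)) := lt_of_lt_of_le (by positivity) hN
  rw [blockMean_sub h _ _ hN₀.ne', abs_div, abs_of_pos hN₀]
  calc _ ≤ D * n / (δ * (n : ℝ) ^ 2) :=
        div_le_div₀ (by positivity) hdev (by positivity) hN
    _ = D / δ * (n : ℝ)⁻¹ := by field_simp

theorem isBigOInProb_u1hat_sub (M : IsDriftingObsSBM P B βm B₀ β₀ κ c A Y Y') (x y : Bool) :
    IsBigOInProb P atTop (fun n ω => u1hat (inBlock x y (c n ω)) (Y n ω) -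
      B n x y * (1 - βm n x y)) fun n => (n : ℝ)⁻¹ := by
  simpa only [pairExpect_observedEdge, ← u1hat_inBlock_eq_blockMean] using
    M.isBigOInProb_blockMean_sub_pairExpect x y observedEdge_mem_Icc

theorem isBigOInProb_u2hat_sub (M : IsDriftingObsSBM P B βm B₀ β₀ κ c A Y Y') (x y : Bool) :
    IsBigOInProb P atTop (fun n ω => u2hat (inBlock x y (c n ω)) (Y n ω) (Y' n ω) -
      B n x y * βm n x y * (1 - βm n x y)) fun n => (n : ℝ)⁻¹ := by
  simpa only [pairExpect_halfDisagreement, ← u2hat_inBlock_eq_blockMean] using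
    M.isBigOInProb_blockMean_sub_pairExpect x y halfDisagreement_mem_Icc

theorem isBigOInProb_betaHat_sub (M : IsDriftingObsSBM P B βm B₀ β₀ κ c A Y Y') (x y : Bool) :
    IsBigOInProb P atTop (fun n ω => betaHat (inBlock x y (c n ω)) (Y n ω) (Y' n ω) - βm n x y)
      fun n => (n : ℝ)⁻¹ := by
  have hB := M.tendsto_conn x y
  have hβ := M.tendsto_err x y
  have hβ' := hβ.const_sub 1
  refine (M.isBigOInProb_u2hat_sub x y).div_sub (M.isBigOInProb_u1hat_sub x y)
    tendsto_inv_atTop_nhds_zero_nat ((hB.mul hβ).mul hβ') (hB.mul hβ')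
    (mul_ne_zero (M.conn_mem x y).1.ne' (sub_pos.2 (M.err_mem x y).2).ne') ?_
  filter_upwards [M.eventually_mem_Ioo] with n hn
  have hB₀ := (hn x y).1.1.ne'
  have hβ₀ := (sub_pos.2 (hn x y).2.2).ne'
  field_simp

theorem isBigOInProb_u1hat_div_sub (M : IsDriftingObsSBM P B βm B₀ β₀ κ c A Y Y') (x y : Bool) :
    IsBigOInProb P atTop (fun n ω => u1hat (inBlock x y (c n ω)) (Y n ω) /
      (1 - betaHat (inBlock x y (c n ω)) (Y n ω) (Y' n ω)) - B n x y) fun n => (n : ℝ)⁻¹ := by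
  have hβ := (M.tendsto_err x y).const_sub 1
  refine (M.isBigOInProb_u1hat_sub x y).div_sub
    ((M.isBigOInProb_betaHat_sub x y).const_sub_sub_const_sub 1)
    tendsto_inv_atTop_nhds_zero_nat ((M.tendsto_conn x y).mul hβ) hβ
    (sub_pos.2 (M.err_mem x y).2).ne' ?_
  filter_upwards [M.eventually_mem_Ioo] with n hn
  exact mul_div_cancel_right₀ _ (sub_pos.2 (hn x y).2.2).ne'

end IsDriftingObsSBM

section LocalAlternatives

theorem eventually_sqrt_mul_div_sqrt (a : ℝ) :
    ∀ᶠ n : ℕ in atTop, √(n : ℝ) * (a / √(n : ℝ)) = a := by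
  filter_upwards [tendsto_sqrt_natCast_atTop.eventually_ne_atTop 0] with n hn
  exact mul_div_cancel₀ a hn

theorem sbmB_comm (x₁ x₂ xb : ℝ) (x y : Bool) : sbmB x₁ x₂ xb x y = sbmB x₁ x₂ xb y x := by
  cases x <;> cases y <;> rfl

theorem tendsto_sbmB {ι : Type*} {l : Filter ι} {f g : ι → ℝ} {a : ℝ} (hf : Tendsto f l (nhds a))
    (hg : Tendsto g l (nhds a)) (x y : Bool) :
    Tendsto (fun i => sbmB (f i) (g i) a x y) l (nhds a) := by
  cases x <;> cases y
  exacts [hg, tendsto_const_nhds, tendsto_const_nhds, hf]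

theorem isDriftingObsSBM_sbmB {κ q β : ℝ} (hκ : κ ∈ Set.Ioo 0 1) (hq : q ∈ Set.Ioo 0 1)
    (hβ : β ∈ Set.Ioo 0 1) {μ₁ μ₂ γ₁ γ₂ : ℝ} {Ω : ℕ → Type*} [∀ n, MeasurableSpace (Ω n)]
    {P : ∀ n, Measure (Ω n)} {c : ∀ n, Ω n → Fin n → Bool}
    {A Y Y' : ∀ n, Ω n → Fin n → Fin n → Bool}
    (hmodel : ∀ᶠ n : ℕ in atTop, IsObsSBM (P n) n (sbmB (q + μ₁ / √n) (q + μ₂ / √n) q)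
      (sbmB (β - γ₁ / √n) (β - γ₂ / √n) β) κ (c n) (A n) (Y n) (Y' n)) :
    IsDriftingObsSBM P (fun n => sbmB (q + μ₁ / √n) (q + μ₂ / √n) q)
      (fun n => sbmB (β - γ₁ / √n) (β - γ₂ / √n) β) (fun _ _ => q) (fun _ _ => β) κ c A Y Y' where
  model := hmodel
  label_mem := hκ
  conn_symm _ := sbmB_comm _ _ _
  err_symm _ := sbmB_comm _ _ _
  tendsto_conn := tendsto_sbmB
    (by simpa using (tendsto_sqrt_natCast_atTop.const_div_atTop μ₁).const_add q)
    (by simpa using (tendsto_sqrt_natCast_atTop.const_div_atTop μ₂).const_add q)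
  tendsto_err := tendsto_sbmB
    (by simpa using (tendsto_sqrt_natCast_atTop.const_div_atTop γ₁).const_sub β)
    (by simpa using (tendsto_sqrt_natCast_atTop.const_div_atTop γ₂).const_sub β)
  conn_mem _ _ := hq
  err_mem _ _ := hβ

end LocalAlternatives

theorem statement_12
    (κ q β μ₁ μ₂ γ₁ γ₂ : ℝ)
    (hκ0 : 0 < κ) (hκ1 : κ < 1) (hq0 : 0 < q) (hq1 : q < 1)
    (hβ0 : 0 < β) (hβ1 : β < 1)
    (Ω : ℕ → Type) [mΩ : ∀ n, MeasurableSpace (Ω n)] (P : ∀ n, Measure (Ω n))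
    (c : ∀ n, Ω n → Fin n → Bool)
    (A Y Y' : ∀ n, Ω n → Fin n → Fin n → Bool)
    (hmodel : ∀ᶠ n : ℕ in atTop,
      IsObsSBM (P n) n
        (sbmB (q + μ₁ / Real.sqrt n) (q + μ₂ / Real.sqrt n) q)
        (sbmB (β - γ₁ / Real.sqrt n) (β - γ₂ / Real.sqrt n) β)
        κ (c n) (A n) (Y n) (Y' n)) :
    -- |β̂_b − β| = O_P(n⁻¹)
    (∀ ε > (0:ℝ), ∃ C > (0:ℝ), ∀ᶠ n : ℕ in atTop,
      (P n {ω | C < (n : ℝ) *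
          |betaHat (between (c n ω)) (Y n ω) (Y' n ω) - β|}).toReal ≤ ε) ∧
    -- |β̂₁ − (β − γ₁/√n)| = O_P(n⁻¹)
    (∀ ε > (0:ℝ), ∃ C > (0:ℝ), ∀ᶠ n : ℕ in atTop,
      (P n {ω | C < (n : ℝ) *
          |betaHat (within1 (c n ω)) (Y n ω) (Y' n ω) -
            (β - γ₁ / Real.sqrt n)|}).toReal ≤ ε) ∧
    -- |β̂₂ − (β − γ₂/√n)| = O_P(n⁻¹)
    (∀ ε > (0:ℝ), ∃ C > (0:ℝ), ∀ᶠ n : ℕ in atTop,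
      (P n {ω | C < (n : ℝ) *
          |betaHat (within2 (c n ω)) (Y n ω) (Y' n ω) -
            (β - γ₂ / Real.sqrt n)|}).toReal ≤ ε) ∧
    -- γ̂₁ →ᵖ γ₁ and γ̂₂ →ᵖ γ₂
    (∀ ε > (0:ℝ),
      Tendsto (fun n => P n {ω |
          ε < |gammaHat1 (c n ω) (Y n ω) (Y' n ω) - γ₁|}) atTop (nhds 0) ∧
      Tendsto (fun n => P n {ω |
          ε < |gammaHat2 (c n ω) (Y n ω) (Y' n ω) - γ₂|}) atTop (nhds 0)) ∧
    -- q̂ = û₁,b/(1 − β̂_b) →ᵖ q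
    (∀ ε > (0:ℝ),
      Tendsto (fun n => P n {ω |
          ε < |u1hat (between (c n ω)) (Y n ω) /
                (1 - betaHat (between (c n ω)) (Y n ω) (Y' n ω)) - q|})
        atTop (nhds 0)) ∧
    -- μ̂₁ →ᵖ μ₁ and μ̂₂ →ᵖ μ₂
    (∀ ε > (0:ℝ),
      Tendsto (fun n => P n {ω |
          ε < |muHat1 (c n ω) (Y n ω) (Y' n ω) - μ₁|}) atTop (nhds 0) ∧
      Tendsto (fun n => P n {ω |
          ε < |muHat2 (c n ω) (Y n ω) (Y' n ω) - μ₂|}) atTop (nhds 0)) := by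
  have M := isDriftingObsSBM_sbmB ⟨hκ0, hκ1⟩ ⟨hq0, hq1⟩ ⟨hβ0, hβ1⟩ hmodel
  have hβb := M.isBigOInProb_betaHat_sub true false
  have hβ₁ := M.isBigOInProb_betaHat_sub true true
  have hβ₂ := M.isBigOInProb_betaHat_sub false false
  have hqb := M.isBigOInProb_u1hat_div_sub true false
  have hγ : ∀ γ : ℝ, ∀ᶠ n : ℕ in atTop, √n * (β - (β - γ / √n)) = γ := by
    simpa only [sub_sub_cancel] using eventually_sqrt_mul_div_sqrt
  have hμ : ∀ μ : ℝ, ∀ᶠ n : ℕ in atTop, √n * (q + μ / √n - q) = μ := by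
    simpa only [add_sub_cancel_left] using eventually_sqrt_mul_div_sqrt
  simp only [gammaHat1, gammaHat2, muHat1, muHat2, within1_eq_inBlock, within2_eq_inBlock,
    between_eq_inBlock]
  exact ⟨fun _ => hβb.exists_toReal_measure_le, fun _ => hβ₁.exists_toReal_measure_le,
    fun _ => hβ₂.exists_toReal_measure_le,
    fun ε hε => ⟨tendstoInProb_sqrt_mul_sub hβb hβ₁ (hγ γ₁) ε hε,
      tendstoInProb_sqrt_mul_sub hβb hβ₂ (hγ γ₂) ε hε⟩,
    hqb.tendstoInProb tendsto_inv_atTop_nhds_zero_nat,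
    fun ε hε => ⟨tendstoInProb_sqrt_mul_sub
        (M.isBigOInProb_u1hat_div_sub true true) hqb (hμ μ₁) ε hε,
      tendstoInProb_sqrt_mul_sub
        (M.isBigOInProb_u1hat_div_sub false false) hqb (hμ μ₂) ε hε⟩⟩

end
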